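/- Let G be a finite simple graph on at least 3 vertices and t a positive integer. Suppose that for every partition P of V(G), the number of crossing edges satisfies |cr(P,G)| ≥ t(|P| - 1). Then the anti-Ramsey number r(G,t) equals the maximum, over all partitions P of V(G) with |P| ≥ 3, of |E(P,G)| + t(|P| - 2). -/

import Mathlib

open Finset
open scoped Classical

/-- The set of non-crossing edges of `G` with respect to a partition `P` of the
vertex set: edges whose two endpoints lie in the same part of `P`. -/
noncomputable def edgesNonCrossing {V : Type} [Fintype V] (G : SimpleGraph V)
    (P : Finpartition (Finset.univ : Finset V)) : Finset (Sym2 V) :=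
  G.edgeFinset.filter (fun e => ∃ p ∈ P.parts, ∀ v ∈ e, v ∈ p)

/-- The set of crossing edges of `G` with respect to a partition `P` of the
vertex set: edges whose endpoints lie in different parts of `P`. -/
noncomputable def edgesCrossing {V : Type} [Fintype V] (G : SimpleGraph V)
    (P : Finpartition (Finset.univ : Finset V)) : Finset (Sym2 V) :=
  G.edgeFinset.filter (fun e => ¬ ∃ p ∈ P.parts, ∀ v ∈ e, v ∈ p)

/-- `G`, edge-colored by `c`, contains `t` pairwise edge-disjoint rainbow
spanning trees. -/
def HasRainbowSpanningTrees {V : Type} [Fintype V] (G : SimpleGraph V)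
    (c : Sym2 V → ℕ) (t : ℕ) : Prop :=
  ∃ T : Fin t → SimpleGraph V,
    (∀ i, T i ≤ G) ∧ (∀ i, (T i).IsTree) ∧
    (∀ i, Set.InjOn c ((T i).edgeSet)) ∧
    (∀ i j, i ≠ j → Disjoint ((T i).edgeSet) ((T j).edgeSet))

/-- The anti-Ramsey number `r(G,t)`: the maximum number of colors in an
edge-coloring of `G` containing no `t` pairwise edge-disjoint rainbow spanning
trees. -/
noncomputable def antiRamsey {V : Type} [Fintype V] (G : SimpleGraph V) (t : ℕ) : ℕ :=
  sSup {m | ∃ c : Sym2 V → ℕ, (G.edgeFinset.image c).card = m ∧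
    ¬ HasRainbowSpanningTrees G c t}

/-- `max_{P : |P| ≥ 3} { |E(P,G)| + t(|P|-2) }`. -/
noncomputable def maxNonCross3 {V : Type} [Fintype V] (G : SimpleGraph V) (t : ℕ) : ℕ :=
  sSup {m | ∃ P : Finpartition (Finset.univ : Finset V), 3 ≤ P.parts.card ∧
    m = (edgesNonCrossing G P).card + t * (P.parts.card - 2)}

/-- `f_G(s)`: the maximum of `|E(P,G)|` over partitions of the vertex set into
exactly `s` parts. -/
noncomputable def fMax {V : Type} [Fintype V] (G : SimpleGraph V) (s : ℕ) : ℕ :=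
  sSup {m | ∃ P : Finpartition (Finset.univ : Finset V), P.parts.card = s ∧
    m = (edgesNonCrossing G P).card}

/-- The number of edges of `G` induced by a set `p` of vertices. -/
noncomputable def edgesWithin {V : Type} [Fintype V] (G : SimpleGraph V) (p : Finset V) : ℕ :=
  (G.edgeFinset.filter (fun e => ∀ v ∈ e, v ∈ p)).card

/-- One splitting step: remove a single vertex from a currently largest part
(measured by the number of non-crossing edges it induces) to form a new
singleton part. -/
def SplitStep {V : Type} [Fintype V] (G : SimpleGraph V)
    (P Q : Finpartition (Finset.univ : Finset V)) : Prop :=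
  ∃ p ∈ P.parts, (∀ q ∈ P.parts, edgesWithin G q ≤ edgesWithin G p) ∧
    ∃ v ∈ p, p.erase v ≠ ∅ ∧
      Q.parts = insert {v} (insert (p.erase v) (P.parts.erase p))

/-- Rado's theorem for monotone submodular functions. -/
theorem rado_aux {α ι : Type*} [DecidableEq α] [DecidableEq ι] [Fintype ι] (f : Finset α → ℕ)
    (hmono : ∀ A B, A ⊆ B → f A ≤ f B)
    (hsub : ∀ A B, f (A ∪ B) + f (A ∩ B) ≤ f A + f B) (N : ℕ) :
    ∀ A : ι → Finset α, (∑ i, (A i).card = N) → (∀ i, (A i).Nonempty) →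
    (∀ J : Finset ι, J.card ≤ f (J.biUnion A)) →
    ∃ x : ι → α, (∀ i, x i ∈ A i) ∧ ∀ J : Finset ι, J.card ≤ f (J.image x) := by
  induction N using Nat.strong_induction_on with
  | _ N ih =>
  intro A hN hne hA
  by_cases hall : ∀ i, (A i).card ≤ 1
  · choose x hx using hne
    refine ⟨x, hx, fun J => ?_⟩
    have : J.biUnion A = J.image x := by
      ext a
      simp only [mem_biUnion, mem_image]
      constructor
      · rintro ⟨i, hi, ha⟩
        exact ⟨i, hi, Finset.card_le_one.1 (hall i) _ (hx i) _ ha⟩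
      · rintro ⟨i, hi, rfl⟩
        exact ⟨i, hi, hx i⟩
    rw [← this]
    exact hA J
  · push Not at hall
    obtain ⟨i, hi⟩ := hall
    obtain ⟨x, hx, y, hy, hxy⟩ := Finset.one_lt_card.1 hi
    -- removing an element
    have key : ∀ z ∈ A i, (∀ J : Finset ι, i ∉ J →
        J.card + 1 ≤ f ((A i).erase z ∪ J.biUnion A)) →
        ∃ x : ι → α, (∀ i, x i ∈ A i) ∧ ∀ J : Finset ι, J.card ≤ f (J.image x) := by
      intro z hz hJ
      set B : ι → Finset α := Function.update A i ((A i).erase z) with hB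
      have hBi : B i = (A i).erase z := by simp [hB]
      have hBj : ∀ j, j ≠ i → B j = A j := fun j hj => by simp [hB, hj]
      have hBA : ∀ j, B j ⊆ A j := by
        intro j
        by_cases hj : j = i
        · subst hj; rw [hBi]; exact erase_subset _ _
        · rw [hBj j hj]
      have hsum : ∑ j, (B j).card < N := by
        rw [← hN]
        apply Finset.sum_lt_sum
        · intro j _; exact card_le_card (hBA j)
        · exact ⟨i, mem_univ _, by rw [hBi]; exact card_erase_lt_of_mem hz⟩
      have hBne : ∀ j, (B j).Nonempty := by
        intro j
        by_cases hj : j = i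
        · subst hj; rw [hBi, ← card_pos, card_erase_of_mem hz]; omega
        · rw [hBj j hj]; exact hne j
      obtain ⟨w, hw, hw2⟩ := ih _ hsum B rfl hBne (by
        intro J
        by_cases hiJ : i ∈ J
        · have h1 := hJ (J.erase i) (notMem_erase _ _)
          have h2 : (J.erase i).card + 1 = J.card := card_erase_add_one hiJ
          rw [h2] at h1
          refine h1.trans (hmono _ _ ?_)
          intro a ha
          rcases mem_union.1 ha with ha | ha
          · exact mem_biUnion.2 ⟨i, hiJ, by rw [hBi]; exact ha⟩
          · obtain ⟨j, hj, ha⟩ := mem_biUnion.1 ha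
            exact mem_biUnion.2 ⟨j, mem_of_mem_erase hj, by rw [hBj j (ne_of_mem_erase hj)]; exact ha⟩
        · refine (hA J).trans (hmono _ _ ?_)
          intro a ha
          obtain ⟨j, hj, ha⟩ := mem_biUnion.1 ha
          exact mem_biUnion.2 ⟨j, hj, by
            rw [hBj j (by rintro rfl; exact hiJ hj)]; exact ha⟩)
      exact ⟨w, fun j => hBA j (hw j), hw2⟩
    by_contra hcon
    have h1 : ¬ ∀ J : Finset ι, i ∉ J → J.card + 1 ≤ f ((A i).erase x ∪ J.biUnion A) :=
      fun hh => hcon (key x hx hh)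
    have h2 : ¬ ∀ J : Finset ι, i ∉ J → J.card + 1 ≤ f ((A i).erase y ∪ J.biUnion A) :=
      fun hh => hcon (key y hy hh)
    push Not at h1 h2
    obtain ⟨J1, hi1, hJ1⟩ := h1
    obtain ⟨J2, hi2, hJ2⟩ := h2
    have h3 := hsub ((A i).erase x ∪ J1.biUnion A) ((A i).erase y ∪ J2.biUnion A)
    have h4 : f ((insert i (J1 ∪ J2)).biUnion A) ≤
        f (((A i).erase x ∪ J1.biUnion A) ∪ ((A i).erase y ∪ J2.biUnion A)) := by
      apply hmono
      intro a ha
      simp only [mem_biUnion, mem_insert, mem_union, mem_erase] at ha ⊢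
      obtain ⟨j, (rfl | hj | hj), ha⟩ := ha
      · by_cases hax : a = x
        · right; left; exact ⟨by rw [hax]; exact hxy, ha⟩
        · left; left; exact ⟨hax, ha⟩
      · left; right; exact ⟨j, hj, ha⟩
      · right; right; exact ⟨j, hj, ha⟩
    have h5 : f ((J1 ∩ J2).biUnion A) ≤
        f (((A i).erase x ∪ J1.biUnion A) ∩ ((A i).erase y ∪ J2.biUnion A)) := by
      apply hmono
      intro a ha
      simp only [mem_biUnion, mem_inter, mem_union] at ha ⊢
      obtain ⟨j, ⟨hj1, hj2⟩, ha⟩ := ha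
      exact ⟨Or.inr ⟨j, hj1, ha⟩, Or.inr ⟨j, hj2, ha⟩⟩
    have h6 := hA (insert i (J1 ∪ J2))
    have h7 := hA (J1 ∩ J2)
    rw [card_insert_of_notMem (by simp [hi1, hi2])] at h6
    have h8 := card_union_add_card_inter J1 J2
    omega

section lin
set_option linter.unusedSectionVars false
variable {V : Type} [Fintype V]

/-- incidence vector of an edge mod 2 -/
noncomputable def evec : Sym2 V → (V → ZMod 2) :=
  Sym2.lift ⟨fun u v => Pi.single u 1 + Pi.single v 1, fun _ _ => add_comm _ _⟩

/-- span of a set of edges -/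
noncomputable def esp (S : Finset (Sym2 V)) : Submodule (ZMod 2) (V → ZMod 2) :=
  Submodule.span (ZMod 2) (evec '' (S : Set (Sym2 V)))

/-- graphic rank -/
noncomputable def rk (S : Finset (Sym2 V)) : ℕ := Module.finrank (ZMod 2) (esp S)

theorem evec_mk (u v : V) : evec s(u, v) = Pi.single u 1 + Pi.single v 1 := rfl

theorem esp_mono {A B : Finset (Sym2 V)} (h : A ⊆ B) : esp A ≤ esp B :=
  Submodule.span_mono (Set.image_mono (by exact_mod_cast h))

theorem mem_esp {A : Finset (Sym2 V)} {e : Sym2 V} (h : e ∈ A) : evec e ∈ esp A :=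
  Submodule.subset_span ⟨e, by exact_mod_cast h, rfl⟩

theorem esp_union (A B : Finset (Sym2 V)) : esp (A ∪ B) = esp A ⊔ esp B := by
  unfold esp
  rw [coe_union, Set.image_union, Submodule.span_union]

theorem rk_mono {A B : Finset (Sym2 V)} (h : A ⊆ B) : rk A ≤ rk B :=
  Submodule.finrank_mono (esp_mono h)

theorem rk_submod (A B : Finset (Sym2 V)) : rk (A ∪ B) + rk (A ∩ B) ≤ rk A + rk B := by
  have h := Submodule.finrank_sup_add_finrank_inf_eq (esp A) (esp B)
  have h2 : rk (A ∩ B) ≤ Module.finrank (ZMod 2) (esp A ⊓ esp B : Submodule _ _) :=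
    Submodule.finrank_mono (le_inf (esp_mono inter_subset_left) (esp_mono inter_subset_right))
  unfold rk at *
  rw [esp_union]
  omega

theorem rk_le_card (A : Finset (Sym2 V)) : rk A ≤ A.card := by
  have h : esp A = Submodule.span (ZMod 2) ((A.image evec : Finset _) : Set (V → ZMod 2)) := by
    rw [coe_image]; rfl
  unfold rk
  rw [h]
  exact (finrank_span_finset_le_card _).trans card_image_le

theorem rk_insert_le (A : Finset (Sym2 V)) (e : Sym2 V) : rk (insert e A) ≤ rk A + 1 := by
  have h := rk_submod {e} A
  have h2 := rk_le_card ({e} : Finset (Sym2 V))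
  rw [card_singleton] at h2
  rw [insert_eq]
  omega

theorem rk_insert_eq {A : Finset (Sym2 V)} {e : Sym2 V} (h : evec e ∉ esp A) :
    rk (insert e A) = rk A + 1 := by
  refine le_antisymm (rk_insert_le A e) ?_
  apply Submodule.finrank_lt_finrank_of_lt
  refine lt_of_le_of_ne (esp_mono (subset_insert _ _)) ?_
  intro heq
  rw [heq] at h
  exact h (mem_esp (mem_insert_self _ _))

theorem mem_esp_of_rk {A B : Finset (Sym2 V)} {e : Sym2 V} (hAB : A ⊆ B) (h : rk B ≤ rk A)
    (he : e ∈ B) : evec e ∈ esp A := by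
  have : esp A = esp B := Submodule.eq_of_le_of_finrank_le (esp_mono hAB) h
  rw [this]; exact mem_esp he

theorem esp_insert_of_mem {A : Finset (Sym2 V)} {e : Sym2 V} (h : evec e ∈ esp A) :
    esp (insert e A) = esp A := by
  rw [insert_eq, esp_union]
  apply sup_eq_right.2
  unfold esp at *
  rw [Submodule.span_le]
  rintro _ ⟨x, hx, rfl⟩
  simp at hx
  subst hx
  exact h

/-- an element of an independent set is not in the span of the others -/
theorem notMem_esp_erase {A : Finset (Sym2 V)} (hA : rk A = A.card) {e : Sym2 V} (he : e ∈ A) :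
    evec e ∉ esp (A.erase e) := by
  intro h
  have h1 := esp_insert_of_mem h
  rw [insert_erase he] at h1
  have h2 := rk_le_card (A.erase e)
  have h3 := card_erase_add_one he
  unfold rk at *
  rw [← h1] at h2
  omega

/-- symmetric exchange -/
theorem sym_exchange {A B : Finset (Sym2 V)} (hA : rk A = A.card) (hB : rk B = B.card)
    {e : Sym2 V} (he : e ∈ A) (heB : evec e ∈ esp B) :
    ∃ g ∈ B, evec g ∉ esp (A.erase e) ∧ evec e ∉ esp (B.erase g) := by
  obtain ⟨C, hC, hmin⟩ := Finset.exists_min_image (B.powerset.filter fun C => evec e ∈ esp C)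
    Finset.card ⟨B, by simp [heB]⟩
  simp only [mem_filter, mem_powerset] at hC hmin
  have h1 : ∃ g ∈ C, evec g ∉ esp (A.erase e) := by
    by_contra hcon
    push Not at hcon
    apply notMem_esp_erase hA he
    have : esp C ≤ esp (A.erase e) := by
      conv_lhs => unfold esp
      rw [Submodule.span_le]
      rintro _ ⟨x, hx, rfl⟩
      exact hcon x (by exact_mod_cast hx)
    exact this hC.2
  obtain ⟨g, hg, hgA⟩ := h1
  have h2 : evec e ∉ esp (C.erase g) := by
    intro hh
    have := hmin (C.erase g) ⟨(erase_subset _ _).trans hC.1, hh⟩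
    have := card_erase_lt_of_mem hg
    omega
  refine ⟨g, hC.1 hg, hgA, fun hh => ?_⟩
  apply notMem_esp_erase hB (hC.1 hg)
  have h3 : evec e ∈ Submodule.span (ZMod 2) (insert (evec g) (evec '' ((C.erase g : Finset _) : Set (Sym2 V)))) := by
    rw [← Set.image_insert_eq, ← coe_insert, insert_erase hg]; exact hC.2
  have h4 := mem_span_insert_exchange h3 h2
  have h5 : Submodule.span (ZMod 2) (insert (evec e) (evec '' ((C.erase g : Finset _) : Set (Sym2 V))))
      ≤ esp (B.erase g) := by
    rw [Submodule.span_le]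
    rintro x (rfl | hx)
    · exact hh
    · exact esp_mono (erase_subset_erase g hC.1) (Submodule.subset_span hx)
  exact h5 h4

/-- count-independent sets of the `t`-fold union -/
def CI (t : ℕ) (S : Finset (Sym2 V)) : Prop := ∀ S' ⊆ S, S'.card ≤ t * rk S'

theorem max_ci {t : ℕ} (ht : 0 < t) (X I : Finset (Sym2 V)) (hIX : I ⊆ X) (hI : CI t I) :
    ∃ J, I ⊆ J ∧ J ⊆ X ∧ CI t J ∧ ∃ T ⊆ J, T.card = t * rk T ∧
      ∀ e ∈ X, e ∉ J → evec e ∈ esp T := by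
  obtain ⟨J, hJ, hmax⟩ := Finset.exists_max_image
    (X.powerset.filter fun J => I ⊆ J ∧ CI t J) Finset.card ⟨I, by simp [hIX, hI]⟩
  simp only [mem_filter, mem_powerset] at hJ hmax
  obtain ⟨hJX, hIJ, hCI⟩ := hJ
  set F := J.powerset.filter fun T => T.card = t * rk T with hF
  have hT : F.sup id ⊆ J ∧ (F.sup id).card = t * rk (F.sup id) := by
    apply Finset.sup_induction (p := fun T => T ⊆ J ∧ T.card = t * rk T)
    · refine ⟨empty_subset _, ?_⟩
      have := rk_le_card (∅ : Finset (Sym2 V))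
      simp at this
      simp [this]
    · rintro A ⟨hA, hA2⟩ B ⟨hB, hB2⟩
      refine ⟨union_subset hA hB, ?_⟩
      have h1 := card_union_add_card_inter A B
      have h2 := Nat.mul_le_mul_left t (rk_submod A B)
      have h3 := hCI (A ∪ B) (union_subset hA hB)
      have h4 := hCI (A ∩ B) (inter_subset_left.trans hA)
      rw [mul_add, mul_add] at h2
      change (A ∪ B).card = t * rk (A ∪ B)
      omega
    · intro T hT
      simpa [hF] using hT
  refine ⟨J, hIJ, hJX, hCI, F.sup id, hT.1, hT.2, fun e he heJ => ?_⟩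
  have h1 : ¬ CI t (insert e J) := by
    intro hh
    have := hmax (insert e J) ⟨insert_subset he hJX, hIJ.trans (subset_insert _ _), hh⟩
    rw [card_insert_of_notMem heJ] at this
    omega
  unfold CI at h1
  push Not at h1
  obtain ⟨S, hS, hS2⟩ := h1
  have heS : e ∈ S := by
    by_contra hh
    have := hCI S ((subset_insert_iff_of_notMem hh).1 hS)
    omega
  have hSe : S.erase e ⊆ J := by rwa [← subset_insert_iff]
  have h2 := hCI _ hSe
  have h3 := card_erase_add_one heS
  have h4 : rk (S.erase e) ≤ rk S := rk_mono (erase_subset _ _)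
  have h5 := Nat.mul_le_mul_left t h4
  have h6 : t * rk S ≤ t * rk (S.erase e) := by omega
  have h7 : rk S ≤ rk (S.erase e) := Nat.le_of_mul_le_mul_left h6 ht
  have h8 := mem_esp_of_rk (erase_subset _ _) h7 heS
  have h9 : S.erase e ∈ F := by
    simp only [hF, mem_filter, mem_powerset]
    exact ⟨hSe, by omega⟩
  exact esp_mono (Finset.le_sup (f := id) h9) h8

/-- Edmonds: count-independent sets are unions of `t` forests. -/
theorem ci_partition {t : ℕ} (ht : 0 < t) (J : Finset (Sym2 V)) (hJ : CI t J) :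
    ∃ φ : Sym2 V → Fin t, ∀ i, rk (J.filter fun e => φ e = i) = (J.filter fun e => φ e = i).card := by
  have : NeZero t := ⟨by omega⟩
  let sl : Finset (Sym2 V × Fin t) → Fin t → Finset (Sym2 V) :=
    fun S i => (S.filter fun x => x.2 = i).image Prod.fst
  have hsl : ∀ S i e, e ∈ sl S i ↔ (e, i) ∈ S := by
    intro S i e
    simp [sl]
  let f : Finset (Sym2 V × Fin t) → ℕ := fun S => ∑ i, rk (sl S i)
  obtain ⟨x, hx, hx2⟩ := rado_aux (ι := J) f
    (by
      intro A B hAB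
      apply Finset.sum_le_sum
      intro i _
      apply rk_mono
      intro e he
      rw [hsl] at *
      exact hAB he)
    (by
      intro A B
      simp only [f]
      rw [← Finset.sum_add_distrib, ← Finset.sum_add_distrib]
      apply Finset.sum_le_sum
      intro i _
      have h1 : sl (A ∪ B) i = sl A i ∪ sl B i := by
        ext e; simp only [hsl, mem_union]
      have h2 : sl (A ∩ B) i = sl A i ∩ sl B i := by
        ext e; simp only [hsl, mem_inter]
      rw [h1, h2]
      exact rk_submod _ _)
    _ (fun e => {e.1} ×ˢ (univ : Finset (Fin t))) rfl
    (by intro e; simp)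
    (by
      intro K
      have h1 : ∀ i, sl (K.biUnion fun e => {e.1} ×ˢ (univ : Finset (Fin t))) i = K.image Subtype.val := by
        intro i
        ext e
        simp only [hsl, mem_biUnion, mem_image, mem_product, mem_singleton, mem_univ, and_true]
        simp [eq_comm]
      simp only [f]
      rw [Finset.sum_congr rfl (fun i _ => by rw [h1 i])]
      simp only [sum_const, card_univ, Fintype.card_fin, smul_eq_mul]
      rw [← card_image_of_injective K Subtype.val_injective]
      apply hJ
      intro e he
      obtain ⟨e', _, rfl⟩ := mem_image.1 he
      exact e'.2)
  have hx1 : ∀ e, (x e).1 = e.1 := by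
    intro e
    have := hx e
    rw [mem_product, mem_singleton] at this
    exact this.1
  refine ⟨fun e => if h : e ∈ J then (x ⟨e, h⟩).2 else 0, fun i => le_antisymm (rk_le_card _) ?_⟩
  set S := J.filter fun e => (if h : e ∈ J then (x ⟨e, h⟩).2 else 0) = i with hS
  have hSmem : ∀ e : J, (e.1 ∈ S ↔ (x e).2 = i) := by
    intro e
    simp [hS]
  have h1 := hx2 (univ.filter fun e : J => (x e).2 = i)
  have h2 : (univ.filter fun e : J => (x e).2 = i).card = S.card := by
    rw [← card_image_of_injective _ Subtype.val_injective]
    congr 1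
    ext e
    simp only [mem_image, mem_filter, mem_univ, true_and]
    constructor
    · rintro ⟨e', h, rfl⟩; exact (hSmem e').2 h
    · intro h
      have heJ : e ∈ J := (mem_filter.1 h).1
      exact ⟨⟨e, heJ⟩, (hSmem ⟨e, heJ⟩).1 h, rfl⟩
  rw [h2] at h1
  refine h1.trans ?_
  simp only [f]
  rw [Finset.sum_eq_single i]
  · apply rk_mono
    intro e he
    rw [hsl] at he
    simp only [mem_image, mem_filter, mem_univ, true_and] at he
    obtain ⟨e', h, h'⟩ := he
    have := hx1 e'
    rw [h'] at this
    simp at this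
    rw [this]
    exact (hSmem e').2 h
  · intro j _ hj
    have : sl (image x {e : J | (x e).2 = i}) j = ∅ := by
      ext e
      simp only [hsl, mem_image, mem_filter, mem_univ, true_and, notMem_empty, iff_false]
      rintro ⟨e', h, h'⟩
      rw [h'] at h
      exact hj h
    rw [this]
    have := rk_le_card (∅ : Finset (Sym2 V))
    simpa using this
  · simp

end lin

section lin2
set_option linter.unusedSectionVars false
variable {V : Type} [Fintype V]

/-- linear functional attached to a vertex weight -/
noncomputable def lfun (χ : V → ZMod 2) : (V → ZMod 2) →ₗ[ZMod 2] ZMod 2 :=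
  ∑ w, χ w • LinearMap.proj w

theorem lfun_single (χ : V → ZMod 2) (a : V) : lfun χ (Pi.single a 1) = χ a := by
  simp [lfun, Pi.single_apply]

theorem lfun_evec (χ : V → ZMod 2) (a b : V) : lfun χ (evec s(a, b)) = χ a + χ b := by
  rw [evec_mk, map_add, lfun_single, lfun_single]

theorem esp_le_ker (S : Finset (Sym2 V)) (χ : V → ZMod 2)
    (h : ∀ a b, s(a, b) ∈ S → χ a = χ b) : esp S ≤ LinearMap.ker (lfun χ) := by
  unfold esp
  rw [Submodule.span_le]
  rintro _ ⟨e, he, rfl⟩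
  induction e using Sym2.ind with
  | _ a b =>
    simp only [SetLike.mem_coe, LinearMap.mem_ker]
    rw [lfun_evec, h a b (by exact_mod_cast he)]
    exact CharTwo.add_self_eq_zero _

theorem finrank_even [Nonempty V] :
    Module.finrank (ZMod 2) (LinearMap.ker (lfun (fun _ : V => (1 : ZMod 2)))) + 1 = Fintype.card V := by
  have h := LinearMap.finrank_range_add_finrank_ker (lfun (fun _ : V => (1 : ZMod 2)))
  have h2 : LinearMap.range (lfun (fun _ : V => (1 : ZMod 2))) = ⊤ := by
    rw [LinearMap.range_eq_top]
    intro x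
    obtain ⟨a⟩ := ‹Nonempty V›
    refine ⟨x • Pi.single a 1, ?_⟩
    rw [map_smul, lfun_single]
    simp
  rw [h2] at h
  simp at h
  omega

theorem rk_add_one_le [Nonempty V] (S : Finset (Sym2 V)) : rk S + 1 ≤ Fintype.card V := by
  rw [← finrank_even (V := V)]
  have := Submodule.finrank_mono (esp_le_ker S (fun _ => 1) (fun _ _ _ => rfl))
  unfold rk
  omega

theorem mem_esp_of_full [Nonempty V] {S : Finset (Sym2 V)} (h : rk S + 1 = Fintype.card V)
    (e : Sym2 V) : evec e ∈ esp S := by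
  apply mem_esp_of_rk (B := insert e S) (subset_insert _ _) ?_ (mem_insert_self _ _)
  have := rk_add_one_le (insert e S)
  omega

theorem tree_of_rk [Nonempty V] (F : Finset (Sym2 V)) (hd : ∀ e ∈ F, ¬ e.IsDiag)
    (h : rk F + 1 = Fintype.card V) (hc : F.card + 1 = Fintype.card V) :
    (SimpleGraph.fromEdgeSet (F : Set (Sym2 V))).IsTree := by
  have hE : (SimpleGraph.fromEdgeSet (F : Set (Sym2 V))).edgeSet = F := by
    rw [SimpleGraph.edgeSet_fromEdgeSet]
    ext e
    simp only [Set.mem_sdiff, mem_coe, Sym2.mem_diagSet]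
    exact ⟨fun h => h.1, fun h => ⟨h, hd e h⟩⟩
  rw [SimpleGraph.isTree_iff_connected_and_card]
  constructor
  · rw [SimpleGraph.connected_iff]
    refine ⟨fun u v => ?_, inferInstance⟩
    by_contra hcon
    let χ : V → ZMod 2 := fun w =>
      if (SimpleGraph.fromEdgeSet (F : Set (Sym2 V))).Reachable u w then 1 else 0
    have h1 := esp_le_ker F χ (by
      intro a b hab
      have hne : a ≠ b := by
        have := hd _ hab
        simpa using this
      have hadj : (SimpleGraph.fromEdgeSet (F : Set (Sym2 V))).Adj a b := by
        rw [SimpleGraph.fromEdgeSet_adj]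
        exact ⟨by exact_mod_cast hab, hne⟩
      have : (SimpleGraph.fromEdgeSet (F : Set (Sym2 V))).Reachable u a ↔
          (SimpleGraph.fromEdgeSet (F : Set (Sym2 V))).Reachable u b :=
        ⟨fun h => h.trans hadj.reachable, fun h => h.trans hadj.symm.reachable⟩
      simp only [χ, this])
    have h2 := h1 (mem_esp_of_full h s(u, v))
    rw [LinearMap.mem_ker, lfun_evec] at h2
    simp [χ, hcon] at h2
  · rw [hE, Nat.card_eq_fintype_card, Nat.card_eq_fintype_card, ← hc]
    simp

theorem add_self_two (f : V → ZMod 2) : f + f = 0 := by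
  funext x
  exact CharTwo.add_self_eq_zero _

theorem sub_eq_two (f g : V → ZMod 2) : f - g = f + g := by
  funext x
  exact CharTwo.sub_eq_add _ _

theorem part_exists (S : Finset (Sym2 V)) :
    ∃ P : Finpartition (Finset.univ : Finset V), Fintype.card V ≤ rk S + P.parts.card ∧
      ∀ e, evec e ∈ esp S → ∃ p ∈ P.parts, ∀ v ∈ e, v ∈ p := by
  let s : Setoid V :=
    { r := fun u v => evec s(u, v) ∈ esp S
      iseqv := by
        refine ⟨fun u => ?_, fun {u v} h => ?_, fun {u v w} h1 h2 => ?_⟩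
        · rw [evec_mk, add_self_two]; exact zero_mem _
        · rw [Sym2.eq_swap]; exact h
        · have := add_mem h1 h2
          rw [evec_mk, evec_mk] at this
          rw [evec_mk]
          convert this using 1
          have h0 : (Pi.single v 1 + Pi.single v 1 : V → ZMod 2) = 0 := add_self_two _
          calc (Pi.single u 1 + Pi.single w 1 : V → ZMod 2)
              = Pi.single u 1 + 0 + Pi.single w 1 := by simp
            _ = _ := by rw [← h0]; abel }
  refine ⟨Finpartition.ofSetoid s, ?_, ?_⟩
  · set P := Finpartition.ofSetoid s with hP
    have hq := Submodule.finrank_quotient_add_finrank (esp S)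
    rw [Module.finrank_fintype_fun_eq_card] at hq
    have hne : ∀ p : P.parts, ∃ v, v ∈ p.1 := fun p => P.nonempty_of_mem_parts p.2
    choose rep hrep using hne
    have hspan : Submodule.span (ZMod 2) (Set.range fun p : P.parts =>
        (esp S).mkQ (Pi.single (rep p) 1)) = ⊤ := by
      have hmem : ∀ v : V, (esp S).mkQ (Pi.single v 1) ∈ Submodule.span (ZMod 2)
          (Set.range fun p : P.parts => (esp S).mkQ (Pi.single (rep p) 1)) := by
        intro v
        have hv : P.part v ∈ P.parts := by simp
        have h1 : s.r v (rep ⟨P.part v, hv⟩) := by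
          have := hrep ⟨P.part v, hv⟩
          exact Finpartition.mem_part_ofSetoid_iff_rel.1 this
        have h2 : (esp S).mkQ (Pi.single v 1) = (esp S).mkQ (Pi.single (rep ⟨P.part v, hv⟩) 1) := by
          rw [← sub_eq_zero, ← map_sub, sub_eq_two]
          rw [Submodule.mkQ_apply, Submodule.Quotient.mk_eq_zero]
          exact h1
        rw [h2]
        exact Submodule.subset_span ⟨_, rfl⟩
      rw [eq_top_iff]
      intro x _
      obtain ⟨f, rfl⟩ := (esp S).mkQ_surjective x
      have hf : f = ∑ v, f v • (Pi.single v 1 : V → ZMod 2) := by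
        ext w
        simp [Pi.single_apply]
      rw [hf, map_sum]
      apply Submodule.sum_mem
      intro v _
      rw [map_smul]
      exact Submodule.smul_mem _ _ (hmem v)
    have hle := finrank_range_le_card (R := ZMod 2) (fun p : P.parts =>
        (esp S).mkQ (Pi.single (rep p) 1))
    unfold Set.finrank at hle
    rw [hspan, finrank_top, Fintype.card_coe] at hle
    unfold rk
    omega
  · intro e
    induction e using Sym2.ind with
    | _ a b =>
      intro h
      refine ⟨(Finpartition.ofSetoid s).part a, by simp, ?_⟩
      intro v hv
      rw [Sym2.mem_iff] at hv
      rcases hv with rfl | rfl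
      · simp
      · exact Finpartition.mem_part_ofSetoid_iff_rel.2 h

/-- a family of `t` disjoint independent spanning edge sets -/
def Good (G : SimpleGraph V) (t : ℕ) (T : Fin t → Finset (Sym2 V)) : Prop :=
  (∀ i, T i ⊆ G.edgeFinset) ∧ (∀ i, rk (T i) = (T i).card) ∧
  (∀ i, (T i).card + 1 = Fintype.card V) ∧ (∀ i j, i ≠ j → Disjoint (T i) (T j))

theorem good_step [Nonempty V] (G : SimpleGraph V) (t : ℕ) (c : Sym2 V → ℕ)
    (T : Fin t → Finset (Sym2 V)) (hT : Good G t T)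
    (hc : t * (Fintype.card V - 2) + 1 ≤ ((univ.biUnion T).image c).card)
    (i : Fin t) (hi : ¬ Set.InjOn c (T i : Set (Sym2 V))) :
    ∃ T' : Fin t → Finset (Sym2 V), Good G t T' ∧ univ.biUnion T' = univ.biUnion T ∧
      ∑ j, ((T j).image c).card < ∑ j, ((T' j).image c).card := by
  obtain ⟨hG, hrk, hcard, hdis⟩ := hT
  set n := Fintype.card V with hn
  -- a tree sharing no colour with `T i`
  have h1 : ∃ j, Disjoint ((T i).image c) ((T j).image c) := by
    by_contra hcon
    push Not at hcon
    have hi1 : ((T i).image c).card + 1 ≤ (T i).card := by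
      have h := card_image_le (s := T i) (f := c)
      have h' : ((T i).image c).card ≠ (T i).card := fun h => hi (card_image_iff.1 h)
      omega
    have h2 : (univ.biUnion T).image c ⊆
        (T i).image c ∪ (univ.erase i).biUnion (fun j => (T j).image c \ (T i).image c) := by
      intro x hx
      simp only [mem_image, mem_biUnion, mem_univ, true_and] at hx
      obtain ⟨e, ⟨j, hj⟩, rfl⟩ := hx
      by_cases hh : c e ∈ (T i).image c
      · exact mem_union_left _ hh
      · apply mem_union_right
        refine mem_biUnion.2 ⟨j, mem_erase.2 ⟨?_, mem_univ _⟩, mem_sdiff.2 ⟨mem_image_of_mem c hj, hh⟩⟩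
        rintro rfl
        exact hh (mem_image_of_mem c hj)
    have h3 := (card_le_card h2).trans (card_union_le _ _)
    have h4 : ((univ.erase i).biUnion (fun j => (T j).image c \ (T i).image c)).card ≤
        (univ.erase i).card * (n - 2) := by
      apply card_biUnion_le_card_mul
      intro j _
      obtain ⟨x, hx1, hx2⟩ := not_disjoint_iff.1 (hcon j)
      have h5 : (T j).image c \ (T i).image c ⊆ ((T j).image c).erase x := by
        intro y hy
        rw [mem_sdiff] at hy
        refine mem_erase.2 ⟨?_, hy.1⟩
        rintro rfl
        exact hy.2 hx1
      have h6 := card_le_card h5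
      rw [card_erase_of_mem hx2] at h6
      have h7 := card_image_le (s := T j) (f := c)
      have h8 := hcard j
      omega
    rw [card_erase_of_mem (mem_univ i), card_univ, Fintype.card_fin] at h4
    have h9 := hcard i
    have htpos : 0 < t := i.pos
    obtain ⟨t', rfl⟩ : ∃ t', t = t' + 1 := ⟨t - 1, by omega⟩
    simp only [Nat.add_sub_cancel] at h4
    rw [add_mul] at hc
    omega
  obtain ⟨j, hj⟩ := h1
  -- repeated colour
  unfold Set.InjOn at hi
  push Not at hi
  obtain ⟨e, he, e', he', hce, hne⟩ := hi
  rw [mem_coe] at he he'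
  have hij : i ≠ j := by
    rintro rfl
    exact (disjoint_left.1 hj) (mem_image_of_mem c he) (mem_image_of_mem c he)
  obtain ⟨g, hg, hg1, hg2⟩ := sym_exchange (hrk i) (hrk j) he
    (mem_esp_of_full (by rw [hrk j]; exact hcard j) e)
  have heTj : e ∉ T j := disjoint_left.1 (hdis i j hij) he
  have hgTi : g ∉ T i := fun h => disjoint_left.1 (hdis i j hij) h hg
  set A := insert g ((T i).erase e) with hA
  set B := insert e ((T j).erase g) with hB
  let T' : Fin t → Finset (Sym2 V) := fun k => if k = i then A else if k = j then B else T k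
  have hTi : T' i = A := by simp [T']
  have hTj : T' j = B := by simp [T', hij.symm]
  have hTk : ∀ k, k ≠ i → k ≠ j → T' k = T k := fun k h1 h2 => by simp [T', h1, h2]
  have hcA : A.card = (T i).card := by
    rw [hA, card_insert_of_notMem (fun h => hgTi (mem_of_mem_erase h)), card_erase_add_one he]
  have hcB : B.card = (T j).card := by
    rw [hB, card_insert_of_notMem (fun h => heTj (mem_of_mem_erase h)), card_erase_add_one hg]
  have hrA : rk A = A.card := by
    refine le_antisymm (rk_le_card _) ?_
    rw [hcA, ← hrk i, hA, rk_insert_eq hg1]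
    conv_lhs => rw [← insert_erase he]
    exact rk_insert_le _ _
  have hrB : rk B = B.card := by
    refine le_antisymm (rk_le_card _) ?_
    rw [hcB, ← hrk j, hB, rk_insert_eq hg2]
    conv_lhs => rw [← insert_erase hg]
    exact rk_insert_le _ _
  have hcases : ∀ k, k = i ∨ k = j ∨ (k ≠ i ∧ k ≠ j) := fun k => by tauto
  have hAsub : ∀ x ∈ A, x = g ∨ (x ∈ T i ∧ x ≠ e) := by
    intro x hx
    rcases mem_insert.1 hx with h | h
    · exact Or.inl h
    · exact Or.inr ⟨mem_of_mem_erase h, ne_of_mem_erase h⟩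
  have hBsub : ∀ x ∈ B, x = e ∨ (x ∈ T j ∧ x ≠ g) := by
    intro x hx
    rcases mem_insert.1 hx with h | h
    · exact Or.inl h
    · exact Or.inr ⟨mem_of_mem_erase h, ne_of_mem_erase h⟩
  have hdAB : Disjoint A B := by
    rw [disjoint_left]
    intro x hx hx'
    rcases hAsub x hx with rfl | ⟨h1, h2⟩ <;> rcases hBsub x hx' with h3 | ⟨h3, h4⟩
    · subst h3; exact hgTi he
    · exact h4 rfl
    · exact h2 h3
    · exact disjoint_left.1 (hdis i j hij) h1 h3
  have hdA : ∀ k, k ≠ i → k ≠ j → Disjoint A (T k) := by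
    intro k h1 h2
    rw [disjoint_left]
    intro x hx hx'
    rcases hAsub x hx with rfl | ⟨h3, _⟩
    · exact disjoint_left.1 (hdis k j h2) hx' hg
    · exact disjoint_left.1 (hdis k i h1) hx' h3
  have hdB : ∀ k, k ≠ i → k ≠ j → Disjoint B (T k) := by
    intro k h1 h2
    rw [disjoint_left]
    intro x hx hx'
    rcases hBsub x hx with rfl | ⟨h3, _⟩
    · exact disjoint_left.1 (hdis k i h1) hx' he
    · exact disjoint_left.1 (hdis k j h2) hx' h3
  refine ⟨T', ⟨?_, ?_, ?_, ?_⟩, ?_, ?_⟩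
  · intro k
    rcases hcases k with rfl | rfl | ⟨h1, h2⟩
    · rw [hTi]
      intro x hx
      rcases hAsub x hx with rfl | ⟨h, _⟩
      · exact hG j hg
      · exact hG _ h
    · rw [hTj]
      intro x hx
      rcases hBsub x hx with rfl | ⟨h, _⟩
      · exact hG i he
      · exact hG _ h
    · rw [hTk k h1 h2]; exact hG k
  · intro k
    rcases hcases k with rfl | rfl | ⟨h1, h2⟩
    · rw [hTi]; exact hrA
    · rw [hTj]; exact hrB
    · rw [hTk k h1 h2]; exact hrk k
  · intro k
    rcases hcases k with rfl | rfl | ⟨h1, h2⟩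
    · rw [hTi, hcA]; exact hcard _
    · rw [hTj, hcB]; exact hcard _
    · rw [hTk k h1 h2]; exact hcard k
  · intro k l hkl
    rcases hcases k with rfl | rfl | ⟨h1, h2⟩ <;> rcases hcases l with rfl | rfl | ⟨h3, h4⟩
    · exact absurd rfl hkl
    · rw [hTi, hTj]; exact hdAB
    · rw [hTi, hTk l h3 h4]; exact hdA l h3 h4
    · rw [hTi, hTj]; exact hdAB.symm
    · exact absurd rfl hkl
    · rw [hTj, hTk l h3 h4]; exact hdB l h3 h4
    · rw [hTi, hTk k h1 h2]; exact (hdA k h1 h2).symm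
    · rw [hTj, hTk k h1 h2]; exact (hdB k h1 h2).symm
    · rw [hTk k h1 h2, hTk l h3 h4]; exact hdis k l hkl
  · ext x
    simp only [mem_biUnion, mem_univ, true_and]
    constructor
    · rintro ⟨k, hk⟩
      rcases hcases k with rfl | rfl | ⟨h1, h2⟩
      · rw [hTi] at hk
        rcases hAsub x hk with rfl | ⟨h, _⟩
        · exact ⟨j, hg⟩
        · exact ⟨_, h⟩
      · rw [hTj] at hk
        rcases hBsub x hk with rfl | ⟨h, _⟩
        · exact ⟨i, he⟩
        · exact ⟨_, h⟩
      · rw [hTk k h1 h2] at hk; exact ⟨k, hk⟩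
    · rintro ⟨k, hk⟩
      rcases hcases k with rfl | rfl | ⟨h1, h2⟩
      · by_cases hx : x = e
        · exact ⟨j, by rw [hTj, hx]; exact mem_insert_self _ _⟩
        · exact ⟨k, by rw [hTi]; exact mem_insert_of_mem (mem_erase.2 ⟨hx, hk⟩)⟩
      · by_cases hx : x = g
        · exact ⟨i, by rw [hTi, hx]; exact mem_insert_self _ _⟩
        · exact ⟨k, by rw [hTj]; exact mem_insert_of_mem (mem_erase.2 ⟨hx, hk⟩)⟩
      · exact ⟨k, by rw [hTk k h1 h2]; exact hk⟩
  · have hiA : ((T i).image c).card < (A.image c).card := by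
      have h1 : insert (c g) ((T i).image c) ⊆ A.image c := by
        intro y hy
        rcases mem_insert.1 hy with rfl | hy
        · exact mem_image_of_mem c (mem_insert_self _ _)
        · obtain ⟨x, hx, rfl⟩ := mem_image.1 hy
          by_cases hxe : x = e
          · rw [hxe, hce]
            exact mem_image_of_mem c (mem_insert_of_mem (mem_erase.2 ⟨hne.symm, he'⟩))
          · exact mem_image_of_mem c (mem_insert_of_mem (mem_erase.2 ⟨hxe, hx⟩))
      have h2 : c g ∉ (T i).image c := fun h =>
        disjoint_left.1 hj h (mem_image_of_mem c hg)
      have h3 := card_le_card h1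
      rw [card_insert_of_notMem h2] at h3
      omega
    have hjB : ((T j).image c).card ≤ (B.image c).card := by
      have h2 : c e ∉ (T j).image c := fun h =>
        disjoint_left.1 hj (mem_image_of_mem c he) h
      have h1 : insert (c e) (((T j).image c).erase (c g)) ⊆ B.image c := by
        intro y hy
        rcases mem_insert.1 hy with rfl | hy
        · exact mem_image_of_mem c (mem_insert_self _ _)
        · obtain ⟨hy1, hy2⟩ := mem_erase.1 hy
          obtain ⟨x, hx, rfl⟩ := mem_image.1 hy2
          refine mem_image_of_mem c (mem_insert_of_mem (mem_erase.2 ⟨?_, hx⟩))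
          rintro rfl
          exact hy1 rfl
      have h3 := card_le_card h1
      rw [card_insert_of_notMem (fun h => h2 (mem_of_mem_erase h)),
        card_erase_add_one (mem_image_of_mem c hg)] at h3
      exact h3
    apply Finset.sum_lt_sum
    · intro k _
      rcases hcases k with rfl | rfl | ⟨h1, h2⟩
      · rw [hTi]; exact hiA.le
      · rw [hTj]; exact hjB
      · rw [hTk k h1 h2]
    · exact ⟨i, mem_univ _, by rw [hTi]; exact hiA⟩

theorem good_rainbow [Nonempty V] (G : SimpleGraph V) (t : ℕ) (c : Sym2 V → ℕ)
    (T : Fin t → Finset (Sym2 V)) (hT : Good G t T)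
    (hc : t * (Fintype.card V - 2) + 1 ≤ ((univ.biUnion T).image c).card) :
    HasRainbowSpanningTrees G c t := by
  obtain ⟨T', hT', hmax⟩ := Finset.exists_max_image
    (univ.filter fun T' : Fin t → Finset (Sym2 V) => Good G t T' ∧ univ.biUnion T' = univ.biUnion T)
    (fun T' => ∑ j, ((T' j).image c).card) ⟨T, by simp [hT]⟩
  simp only [mem_filter, mem_univ, true_and] at hT' hmax
  obtain ⟨hgood, hU⟩ := hT'
  have hinj : ∀ i, Set.InjOn c (T' i : Set (Sym2 V)) := by
    intro i
    by_contra hi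
    obtain ⟨T'', h1, h2, h3⟩ := good_step G t c T' hgood (by rw [hU]; exact hc) i hi
    have := hmax T'' ⟨h1, h2.trans hU⟩
    omega
  obtain ⟨hG, hrk, hcard, hdis⟩ := hgood
  have hd : ∀ i, ∀ e ∈ T' i, ¬ e.IsDiag := by
    intro i e he
    exact G.not_isDiag_of_mem_edgeSet (SimpleGraph.mem_edgeFinset.1 (hG i he))
  have hE : ∀ i, (SimpleGraph.fromEdgeSet (T' i : Set (Sym2 V))).edgeSet = T' i := by
    intro i
    rw [SimpleGraph.edgeSet_fromEdgeSet]
    ext e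
    simp only [Set.mem_sdiff, mem_coe, Sym2.mem_diagSet]
    exact ⟨fun h => h.1, fun h => ⟨h, hd i e h⟩⟩
  refine ⟨fun i => SimpleGraph.fromEdgeSet (T' i : Set (Sym2 V)), ?_, ?_, ?_, ?_⟩
  · intro i
    rw [← SimpleGraph.edgeSet_subset_edgeSet, hE]
    intro e he
    exact SimpleGraph.mem_edgeFinset.1 (hG i he)
  · intro i
    exact tree_of_rk _ (hd i) (by rw [hrk]; exact hcard i) (hcard i)
  · intro i
    rw [hE]; exact hinj i
  · intro i j hij
    rw [hE, hE]
    exact_mod_cast hdis i j hij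

end lin2

section mainpart
set_option linter.unusedSectionVars false
variable {V : Type} [Fintype V]

theorem card_cross_add (G : SimpleGraph V) (P : Finpartition (Finset.univ : Finset V)) :
    (edgesNonCrossing G P).card + (edgesCrossing G P).card = G.edgeFinset.card := by
  unfold edgesNonCrossing edgesCrossing
  exact card_filter_add_card_filter_not _

theorem noncross_iff (P : Finpartition (Finset.univ : Finset V)) (a b : V) :
    (∃ p ∈ P.parts, ∀ v ∈ s(a, b), v ∈ p) ↔ P.part a = P.part b := by
  constructor
  · rintro ⟨p, hp, h⟩
    rw [P.part_eq_of_mem hp (h a (by simp)), P.part_eq_of_mem hp (h b (by simp))]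
  · intro h
    refine ⟨P.part a, by simp, ?_⟩
    intro v hv
    rw [Sym2.mem_iff] at hv
    rcases hv with rfl | rfl
    · simp
    · rw [h]; simp

/-- A connected graph has at least `|P| - 1` crossing edges. -/
theorem connected_cross (T : SimpleGraph V) (hT : T.Connected)
    (P : Finpartition (Finset.univ : Finset V)) :
    P.parts.card ≤ (edgesCrossing T P).card + 1 := by
  let π : V → P.parts := fun v => ⟨P.part v, by simp⟩
  have hπ : Function.Surjective π := by
    rintro ⟨p, hp⟩
    obtain ⟨v, hv⟩ := P.nonempty_of_mem_parts hp
    exact ⟨v, Subtype.ext (P.part_eq_of_mem hp hv)⟩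
  let Q : SimpleGraph P.parts := SimpleGraph.fromEdgeSet ((Sym2.map π) '' T.edgeSet)
  have hreach : ∀ u v, T.Reachable u v → Q.Reachable (π u) (π v) := by
    intro u v huv
    obtain ⟨w⟩ := huv
    induction w with
    | nil => exact SimpleGraph.Reachable.refl _
    | @cons a b d hab _ ih =>
      refine SimpleGraph.Reachable.trans ?_ ih
      by_cases hq : π a = π b
      · rw [hq]
      · apply SimpleGraph.Adj.reachable
        rw [SimpleGraph.fromEdgeSet_adj]
        exact ⟨⟨s(a, b), hab, rfl⟩, hq⟩
  have hQ : Q.Connected := by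
    rw [SimpleGraph.connected_iff]
    refine ⟨fun x y => ?_, ?_⟩
    · obtain ⟨u, rfl⟩ := hπ x
      obtain ⟨v, rfl⟩ := hπ y
      exact hreach u v (hT.preconnected u v)
    · obtain ⟨v⟩ := hT.nonempty
      exact ⟨π v⟩
  have h1 := hQ.card_vert_le_card_edgeSet_add_one
  have h2 : Q.edgeSet ⊆ (((edgesCrossing T P).image (Sym2.map π) : Finset (Sym2 P.parts)) : Set _) := by
    intro e he
    rw [SimpleGraph.edgeSet_fromEdgeSet] at he
    obtain ⟨⟨e', he', rfl⟩, hd⟩ := he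
    rw [mem_coe]
    refine mem_image_of_mem _ ?_
    unfold edgesCrossing
    rw [mem_filter]
    refine ⟨SimpleGraph.mem_edgeFinset.2 he', ?_⟩
    induction e' using Sym2.ind with
    | _ a b =>
      rw [noncross_iff]
      intro hab
      apply hd
      simp [π, hab]
  have h3 : Nat.card Q.edgeSet ≤ ((edgesCrossing T P).image (Sym2.map π)).card := by
    have := Nat.card_mono (Finset.finite_toSet _) h2
    simpa using this
  have h4 := card_image_le (s := edgesCrossing T P) (f := Sym2.map π)
  rw [Nat.card_eq_fintype_card, Fintype.card_coe] at h1
  omega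

theorem lower_bound (G : SimpleGraph V) (t : ℕ) (ht : 0 < t)
    (h : ∀ P : Finpartition (Finset.univ : Finset V),
      t * (P.parts.card - 1) ≤ (edgesCrossing G P).card)
    (P : Finpartition (Finset.univ : Finset V)) (hP : 3 ≤ P.parts.card) :
    ∃ c : Sym2 V → ℕ, (edgesNonCrossing G P).card + t * (P.parts.card - 2) ≤
      (G.edgeFinset.image c).card ∧ ¬ HasRainbowSpanningTrees G c t := by
  set k := P.parts.card with hk
  have hpos : 0 < t * (k - 2) := Nat.mul_pos ht (by omega)
  have hcr := h P
  rw [← hk] at hcr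
  have hlt : t * (k - 2) ≤ t * (k - 1) := Nat.mul_le_mul_left t (by omega)
  obtain ⟨S, hS, hScard⟩ := Finset.exists_subset_card_eq
    (s := edgesCrossing G P) (n := t * (k - 2) - 1) (by omega)
  let g := Fintype.equivFin (Sym2 V)
  let c : Sym2 V → ℕ := fun e => if e ∈ edgesCrossing G P \ S then 0 else (g e : ℕ) + 1
  have hdisj : Disjoint (edgesNonCrossing G P) (edgesCrossing G P) := by
    unfold edgesNonCrossing edgesCrossing
    exact disjoint_filter_filter_not _ _ _
  refine ⟨c, ?_, ?_⟩
  · have hne : ∃ e0, e0 ∈ edgesCrossing G P \ S := by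
      have h1 := card_sdiff_add_card_eq_card hS
      have h2 : 0 < (edgesCrossing G P \ S).card := by omega
      exact card_pos.1 h2
    obtain ⟨e0, he0⟩ := hne
    have hsub : insert 0 ((edgesNonCrossing G P ∪ S).image c) ⊆ G.edgeFinset.image c := by
      intro x hx
      rcases mem_insert.1 hx with rfl | hx
      · refine mem_image.2 ⟨e0, (mem_filter.1 (mem_sdiff.1 he0).1).1, ?_⟩
        simp only [c, if_pos he0]
      · obtain ⟨e, he, rfl⟩ := mem_image.1 hx
        refine mem_image_of_mem c ?_
        rcases mem_union.1 he with he | he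
        · exact (mem_filter.1 he).1
        · exact (mem_filter.1 (hS he)).1
    have hval : ∀ e ∈ edgesNonCrossing G P ∪ S, c e = (g e : ℕ) + 1 := by
      intro e he
      have : e ∉ edgesCrossing G P \ S := by
        intro hh
        rw [mem_sdiff] at hh
        rcases mem_union.1 he with he | he
        · exact disjoint_left.1 hdisj he hh.1
        · exact hh.2 he
      simp only [c, if_neg this]
    have h1 : ((edgesNonCrossing G P ∪ S).image c).card = (edgesNonCrossing G P ∪ S).card := by
      apply card_image_of_injOn
      intro a ha b hb hab
      rw [hval a ha, hval b hb] at hab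
      apply g.injective
      apply Fin.ext
      omega
    have h2 : 0 ∉ (edgesNonCrossing G P ∪ S).image c := by
      intro hh
      obtain ⟨e, he, he0⟩ := mem_image.1 hh
      rw [hval e he] at he0
      omega
    have h3 := card_le_card hsub
    rw [card_insert_of_notMem h2, h1, card_union_of_disjoint (hdisj.mono_right hS), hScard] at h3
    omega
  · rintro ⟨T, hTG, hTree, hinj, hdis⟩
    have h1 : ∀ i, k - 2 ≤ (S.filter fun e => e ∈ (T i).edgeSet).card := by
      intro i
      have h2 := connected_cross (T i) (hTree i).connected P
      have h3 : edgesCrossing (T i) P ⊆ (S.filter fun e => e ∈ (T i).edgeSet) ∪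
          (edgesCrossing (T i) P).filter (fun e => e ∉ S) := by
        intro e he
        by_cases heS : e ∈ S
        · exact mem_union_left _ (mem_filter.2 ⟨heS, SimpleGraph.mem_edgeFinset.1 (mem_filter.1 he).1⟩)
        · exact mem_union_right _ (mem_filter.2 ⟨he, heS⟩)
      have h4 : ((edgesCrossing (T i) P).filter (fun e => e ∉ S)).card ≤ 1 := by
        rw [card_le_one]
        have hz : ∀ a ∈ (edgesCrossing (T i) P).filter (fun e => e ∉ S),
            c a = 0 ∧ a ∈ (T i).edgeSet := by
          intro a ha
          obtain ⟨ha1, ha2⟩ := mem_filter.1 ha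
          obtain ⟨ha3, ha4⟩ := mem_filter.1 ha1
          have ha5 : a ∈ (T i).edgeSet := SimpleGraph.mem_edgeFinset.1 ha3
          have ha6 : a ∈ edgesCrossing G P \ S := by
            refine mem_sdiff.2 ⟨mem_filter.2 ⟨SimpleGraph.mem_edgeFinset.2 ?_, ha4⟩, ha2⟩
            exact SimpleGraph.edgeSet_subset_edgeSet.2 (hTG i) ha5
          exact ⟨by simp only [c, if_pos ha6], ha5⟩
        intro a ha b hb
        exact hinj i (hz a ha).2 (hz b hb).2 ((hz a ha).1.trans (hz b hb).1.symm)
      have h5 := (card_le_card h3).trans (card_union_le _ _)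
      omega
    have h2 : (univ.biUnion fun i => S.filter fun e => e ∈ (T i).edgeSet).card =
        ∑ i, (S.filter fun e => e ∈ (T i).edgeSet).card := by
      apply card_biUnion
      intro i _ j _ hij
      change Disjoint _ _
      rw [disjoint_left]
      intro e he he'
      exact Set.disjoint_left.1 (hdis i j hij) (mem_filter.1 he).2 (mem_filter.1 he').2
    have h3 : (univ.biUnion fun i => S.filter fun e => e ∈ (T i).edgeSet).card ≤ S.card := by
      apply card_le_card
      intro e he
      obtain ⟨i, _, hi⟩ := mem_biUnion.1 he
      exact (mem_filter.1 hi).1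
    have h4 : t * (k - 2) ≤ ∑ i : Fin t, (S.filter fun e => e ∈ (T i).edgeSet).card := by
      calc t * (k - 2) = ∑ _i : Fin t, (k - 2) := by simp
        _ ≤ _ := Finset.sum_le_sum fun i _ => h1 i
    omega

theorem upper_bound (G : SimpleGraph V) (t : ℕ) (ht : 0 < t)
    (hV : 3 ≤ Fintype.card V)
    (h : ∀ P : Finpartition (Finset.univ : Finset V),
      t * (P.parts.card - 1) ≤ (edgesCrossing G P).card)
    (c : Sym2 V → ℕ)
    (hm : ∀ P : Finpartition (Finset.univ : Finset V), 3 ≤ P.parts.card →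
      (edgesNonCrossing G P).card + t * (P.parts.card - 2) < (G.edgeFinset.image c).card) :
    HasRainbowSpanningTrees G c t := by
  have hVne : Nonempty V := Fintype.card_pos_iff.1 (by omega)
  set n := Fintype.card V with hn
  set E := G.edgeFinset with hE
  set m := (E.image c).card with hmdef
  have hm0 : t * (n - 2) + 1 ≤ m := by
    have := hm ⊥ (by rw [Finpartition.card_bot, card_univ]; exact hV)
    rw [Finpartition.card_bot, card_univ, ← hn] at this
    omega
  obtain ⟨d, hd⟩ : ∃ d, m = t * (n - 2) + 1 + d := ⟨m - (t * (n - 2) + 1), by omega⟩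
  have hpartcard : ∀ P : Finpartition (Finset.univ : Finset V), 1 ≤ P.parts.card := by
    intro P
    obtain ⟨v⟩ := hVne
    exact card_pos.2 ⟨P.part v, by simp⟩
  have hpartle : ∀ P : Finpartition (Finset.univ : Finset V), P.parts.card ≤ n := by
    intro P
    have := P.card_parts_le_card
    rwa [card_univ] at this
  -- choose one edge per colour
  obtain ⟨x, hx, hx2⟩ := rado_aux (ι := {y // y ∈ E.image c}) (fun S : Finset (Sym2 V) => t * rk S + d)
    (by
      intro A B hAB
      have := Nat.mul_le_mul_left t (rk_mono hAB)
      omega)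
    (by
      intro A B
      have := Nat.mul_le_mul_left t (rk_submod A B)
      rw [mul_add, mul_add] at this
      omega)
    _ (fun γ => E.filter fun e => c e = γ.1) rfl
    (by
      rintro ⟨y, hy⟩
      obtain ⟨e, he, rfl⟩ := mem_image.1 hy
      exact ⟨e, mem_filter.2 ⟨he, rfl⟩⟩)
    (by
      intro J
      set A := J.biUnion (fun γ => E.filter fun e => c e = γ.1) with hA
      obtain ⟨P, hP, hPA⟩ := part_exists A
      rw [← hn] at hP
      set k := P.parts.card with hk
      have hk1 := hpartcard P
      have hkn := hpartle P
      have hmul : t * (n - k) ≤ t * rk A := Nat.mul_le_mul_left t (by omega)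
      have hJm : J.card ≤ m := by
        have := card_le_univ J
        rwa [Fintype.card_coe] at this
      have hAE : A ⊆ edgesNonCrossing G P := by
        intro e he
        obtain ⟨γ, _, he'⟩ := mem_biUnion.1 he
        exact mem_filter.2 ⟨(mem_filter.1 he').1, hPA e (mem_esp he)⟩
      have hJA : J.image Subtype.val ⊆ A.image c := by
        intro y hy
        obtain ⟨γ, hγ, rfl⟩ := mem_image.1 hy
        obtain ⟨e, he, hce⟩ := mem_image.1 γ.2
        exact mem_image.2 ⟨e, mem_biUnion.2 ⟨γ, hγ, mem_filter.2 ⟨he, hce⟩⟩, hce⟩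
      have hJcard : (J.image Subtype.val).card = J.card :=
        card_image_of_injective J Subtype.val_injective
      rcases (by omega : 3 ≤ k ∨ k = 2 ∨ k = 1) with hk3 | hk2 | hk1'
      · have h1 := hm P hk3
        have h2 := card_le_card hJA
        have h3 := card_image_le (s := A) (f := c)
        have h4 := card_le_card hAE
        have h5 : t * (n - 2) = t * (n - k) + t * (k - 2) := by
          rw [← mul_add]; congr 1; omega
        rw [← hk] at h1
        omega
      · have h1 := h P
        rw [← hk, hk2] at h1
        have h2 : 0 < (edgesCrossing G P).card := by omega
        obtain ⟨e, he⟩ := card_pos.1 h2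
        obtain ⟨heE, hecr⟩ := mem_filter.1 he
        have h3 : J ≠ univ := by
          rintro rfl
          apply hecr
          apply hPA
          apply mem_esp
          exact mem_biUnion.2 ⟨⟨c e, mem_image_of_mem c heE⟩, mem_univ _, mem_filter.2 ⟨heE, rfl⟩⟩
        have h4 := card_lt_card (ssubset_univ_iff.2 h3)
        rw [card_univ] at h4
        rw [Fintype.card_coe] at h4
        rw [hk2] at hmul
        omega
      · rw [hk1'] at hmul
        have h5 : t * (n - 1) = t * (n - 2) + t := by
          rw [← Nat.mul_succ]; congr 1; omega
        omega)
  have hxE : ∀ γ, x γ ∈ E := fun γ => (mem_filter.1 (hx γ)).1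
  have hxc : ∀ γ, c (x γ) = γ.1 := fun γ => (mem_filter.1 (hx γ)).2
  have hxinj : Function.Injective x := by
    intro a b hab
    apply Subtype.ext
    rw [← hxc a, ← hxc b, hab]
  set X := univ.image x with hX
  have hXcard : X.card = m := by
    rw [hX, card_image_of_injective _ hxinj, card_univ, Fintype.card_coe]
  have hXE : X ⊆ E := by
    intro e he
    obtain ⟨γ, _, rfl⟩ := mem_image.1 he
    exact hxE γ
  have hXsub : ∀ S ⊆ X, S.card ≤ t * rk S + d := by
    intro S hS
    have h1 := hx2 (univ.filter fun γ => x γ ∈ S)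
    have h2 : (univ.filter fun γ => x γ ∈ S).image x = S := by
      ext e
      simp only [mem_image, mem_filter, mem_univ, true_and]
      constructor
      · rintro ⟨γ, h, rfl⟩; exact h
      · intro he
        obtain ⟨γ, _, rfl⟩ := mem_image.1 (hS he)
        exact ⟨γ, he, rfl⟩
    rw [h2] at h1
    rw [← card_image_of_injective _ hxinj, h2] at h1
    exact h1
  have hXinj : Set.InjOn c (X : Set (Sym2 V)) := by
    intro a ha b hb hab
    obtain ⟨γ, _, rfl⟩ := mem_image.1 (mem_coe.1 ha)
    obtain ⟨γ', _, rfl⟩ := mem_image.1 (mem_coe.1 hb)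
    rw [hxc, hxc] at hab
    rw [Subtype.ext hab]
  -- a large rainbow independent set
  obtain ⟨I, _, hIX, hICI, T, hTI, hTt, hTs⟩ := max_ci ht X ∅ (empty_subset _) (by
    intro S hS
    rw [subset_empty.1 hS]; simp)
  have hIcard : t * (n - 2) + 1 ≤ I.card := by
    have h1 := hXsub (T ∪ (X \ I)) (union_subset (hTI.trans hIX) sdiff_subset)
    have h2 : rk (T ∪ (X \ I)) ≤ rk T := by
      apply Submodule.finrank_mono
      rw [esp_union]
      refine sup_le le_rfl ?_
      conv_lhs => unfold esp
      rw [Submodule.span_le]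
      rintro _ ⟨e, he, rfl⟩
      have he' := mem_sdiff.1 (mem_coe.1 he)
      exact hTs e he'.1 he'.2
    have h3 := Nat.mul_le_mul_left t h2
    have h4 : (T ∪ (X \ I)).card = T.card + (X \ I).card := by
      apply card_union_of_disjoint
      rw [disjoint_left]
      intro e he he'
      exact (mem_sdiff.1 he').2 (hTI he)
    have h5 := card_sdiff_add_card_eq_card hIX
    omega
  -- extend to a base
  obtain ⟨J, hIJ, hJE, hJCI, T', hTJ, hTt', hTs'⟩ := max_ci ht E I (hIX.trans hXE) hICI
  have hJcard : t * (n - 1) ≤ J.card := by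
    obtain ⟨P, hP, hPA⟩ := part_exists T'
    rw [← hn] at hP
    have h1 : T' ∪ edgesCrossing G P ⊆ J := by
      apply union_subset hTJ
      intro e he
      obtain ⟨heE, hecr⟩ := mem_filter.1 he
      by_contra heJ
      exact hecr (hPA e (hTs' e heE heJ))
    have h2 : (T' ∪ edgesCrossing G P).card = T'.card + (edgesCrossing G P).card := by
      apply card_union_of_disjoint
      rw [disjoint_left]
      intro e he he'
      exact (mem_filter.1 he').2 (hPA e (mem_esp he))
    have h3 := card_le_card h1
    have h4 := h P
    have h5 : t * (n - P.parts.card) ≤ t * rk T' := Nat.mul_le_mul_left t (by omega)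
    have h6 : t * (n - 1) = t * (n - P.parts.card) + t * (P.parts.card - 1) := by
      rw [← mul_add]; congr 1
      have := hpartcard P
      have := hpartle P
      omega
    omega
  obtain ⟨φ, hφ⟩ := ci_partition ht J hJCI
  have hle : ∀ i, (J.filter fun e => φ e = i).card ≤ n - 1 := by
    intro i
    rw [← hφ i]
    have := rk_add_one_le (J.filter fun e => φ e = i)
    omega
  have hsum : J.card = ∑ i, (J.filter fun e => φ e = i).card :=
    card_eq_sum_card_fiberwise (fun _ _ => mem_coe.2 (mem_univ _))
  have heq : ∀ i, (J.filter fun e => φ e = i).card = n - 1 := by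
    have h1 : ∑ i, (J.filter fun e => φ e = i).card = ∑ _i : Fin t, (n - 1) := by
      apply le_antisymm
      · exact Finset.sum_le_sum fun i _ => hle i
      · rw [← hsum]; simpa using hJcard
    intro i
    exact (Finset.sum_eq_sum_iff_of_le (fun i _ => hle i)).1 h1 i (mem_univ _)
  have hU : (univ : Finset (Fin t)).biUnion (fun i => J.filter fun e => φ e = i) = J := by
    ext e
    simp
  refine good_rainbow G t c (fun i => J.filter fun e => φ e = i) ⟨?_, hφ, ?_, ?_⟩ ?_
  · intro i; exact (filter_subset _ _).trans hJE
  · intro i; rw [heq i]; omega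
  · intro i j hij
    rw [disjoint_left]
    intro e he he'
    exact hij ((mem_filter.1 he).2.symm.trans (mem_filter.1 he').2)
  · rw [hU]
    refine hIcard.trans ?_
    rw [← card_image_of_injOn (hXinj.mono (by exact_mod_cast hIX) : Set.InjOn c (I : Set (Sym2 V)))]
    exact card_le_card (image_subset_image hIJ)

end mainpart

/-- If every partition `P` of `V(G)` satisfies
`|cr(P,G)| ≥ t(|P|-1)`, then `r(G,t) = max_{P : |P| ≥ 3} { |E(P,G)| + t(|P|-2) }`. -/
theorem stmt1 {V : Type} [Fintype V] (G : SimpleGraph V) (t : ℕ) (ht : 0 < t)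
    (hV : 3 ≤ Fintype.card V)
    (h : ∀ P : Finpartition (Finset.univ : Finset V),
      t * (P.parts.card - 1) ≤ (edgesCrossing G P).card) :
    antiRamsey G t = maxNonCross3 G t := by
  apply le_antisymm
  · apply csSup_le'
    rintro m ⟨c, rfl, hc⟩
    by_contra hcon
    apply hc
    apply upper_bound G t ht hV h c
    intro P hP
    refine lt_of_le_of_lt ?_ (not_le.1 hcon)
    apply le_csSup
    · refine ⟨G.edgeFinset.card + t * Fintype.card V, ?_⟩
      rintro m ⟨Q, _, rfl⟩
      have h1 := card_cross_add G Q
      have h2 := Q.card_parts_le_card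
      rw [card_univ] at h2
      have h3 : t * (Q.parts.card - 2) ≤ t * Fintype.card V := Nat.mul_le_mul_left t (by omega)
      omega
    · exact ⟨P, hP, rfl⟩
  · apply csSup_le'
    rintro m ⟨P, hP, rfl⟩
    obtain ⟨c, hc1, hc2⟩ := lower_bound G t ht h P hP
    refine hc1.trans ?_
    apply le_csSup
    · refine ⟨G.edgeFinset.card, ?_⟩
      rintro m ⟨c', rfl, _⟩
      exact card_image_le
    · exact ⟨c, rfl, hc2⟩
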